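/- There exists C > 0 such that for every differentiable u : ℝ³ → ℂ with u, ∇u ∈ L²(ℝ³): setting ŵ(p) = ∫_{ℝ³} e^{−ip·x}|u(x)|² dx, the kernel M_u(k,l) = (k·l)·B₀(k)·B₀(l)·ŵ(k+l) is square-integrable on ℝ³×ℝ³ with (∫∫_{ℝ³×ℝ³} |M_u(k,l)|² dk dl)^{1/2} ≤ C ‖u‖_{H¹}². -/

import Mathlib

open MeasureTheory
open scoped ENNReal

noncomputable section

/-- The dispersion relation `ω(k) = √(1+|k|²)` of the massive scalar field. -/
def ω (k : EuclideanSpace ℝ (Fin 3)) : ℝ := Real.sqrt (1 + ‖k‖ ^ 2)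

/-- The Gross dressing form factor `B₀(k) = 1/(√(ω(k))·(|k|²+ω(k)))`. -/
def B0 (k : EuclideanSpace ℝ (Fin 3)) : ℝ := 1 / (Real.sqrt (ω k) * (‖k‖ ^ 2 + ω k))

/-- The square of the `H¹`-norm, `‖u‖_{H¹}² = ‖u‖_{L²}² + ‖∇u‖_{L²}²`. -/
def H1sq (u : EuclideanSpace ℝ (Fin 3) → ℂ) : ℝ :=
  (∫ x, ‖u x‖ ^ 2) + ∫ x, ‖fderiv ℝ u x‖ ^ 2

/-- The `H¹`-norm of `u`. -/
def H1norm (u : EuclideanSpace ℝ (Fin 3) → ℂ) : ℝ := Real.sqrt (H1sq u)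

/-- `ŵ(p) = ∫ e^{−ip·x}|u(x)|² dx`. -/
def what (u : EuclideanSpace ℝ (Fin 3) → ℂ) (p : EuclideanSpace ℝ (Fin 3)) : ℂ :=
  ∫ x, Complex.exp (-(Complex.I * ((inner ℝ p x : ℝ) : ℂ))) * ((‖u x‖ ^ 2 : ℝ) : ℂ)

/-- The Bogoliubov kernel `M_u(k,l) = (k·l)·B₀(k)·B₀(l)·ŵ(k+l)`. -/
def Mker (u : EuclideanSpace ℝ (Fin 3) → ℂ) (k l : EuclideanSpace ℝ (Fin 3)) : ℂ :=
  (((inner ℝ k l : ℝ) * B0 k * B0 l : ℝ) : ℂ) * what u (k + l)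


abbrev E3 := EuclideanSpace ℝ (Fin 3)

/-- The integrable weight `(1+|k|²)^{-2}`. -/
def gw (k : E3) : ℝ := ((1 + ‖k‖ ^ 2) ^ 2)⁻¹

lemma gw_nonneg (k : E3) : 0 ≤ gw k := by unfold gw; positivity

lemma gw_cont : Continuous gw := by
  unfold gw
  refine Continuous.inv₀ (by fun_prop) (fun x => by positivity)

lemma gw_integrable : Integrable gw volume := by
  have h := integrable_rpow_neg_one_add_norm_sq (E := E3) (μ := volume) (r := 4) (by simp; norm_num)
  refine h.congr (Filter.Eventually.of_forall fun x => ?_)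
  have h0 : (0:ℝ) ≤ 1 + ‖x‖ ^ 2 := by positivity
  simp only [gw]
  rw [show (-4 / 2 : ℝ) = -((2:ℕ):ℝ) by norm_num, Real.rpow_neg h0, Real.rpow_natCast]

lemma u_sq_int (u : E3 → ℂ) (h : MemLp u 2 volume) : Integrable (fun x => ‖u x‖ ^ 2) :=
  (memLp_two_iff_integrable_sq_norm h.1).1 h

lemma du_sq_int (u : E3 → ℂ) (h : MemLp (fun x => fderiv ℝ u x) 2 volume) :
    Integrable (fun x => ‖fderiv ℝ u x‖ ^ 2) :=
  (memLp_two_iff_integrable_sq_norm h.1).1 h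

lemma H1sq_nonneg (u : E3 → ℂ) : 0 ≤ H1sq u := by
  unfold H1sq
  have h1 : 0 ≤ ∫ x, ‖u x‖ ^ 2 := integral_nonneg fun x => by positivity
  have h2 : 0 ≤ ∫ x, ‖fderiv ℝ u x‖ ^ 2 := integral_nonneg fun x => by positivity
  linarith

lemma norm_phase (p x : E3) :
    ‖Complex.exp (-(Complex.I * ((inner ℝ p x : ℝ) : ℂ)))‖ = 1 := by
  rw [Complex.norm_exp]; simp

lemma what_le (u : E3 → ℂ) (p : E3) : ‖what u p‖ ≤ H1sq u := by
  have h2 : 0 ≤ ∫ x, ‖fderiv ℝ u x‖ ^ 2 := integral_nonneg fun x => by positivity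
  have : ‖what u p‖ ≤ ∫ x, ‖u x‖ ^ 2 := by
    refine (norm_integral_le_integral_norm _).trans (le_of_eq ?_)
    congr 1; ext x
    rw [norm_mul, norm_phase, Complex.norm_real]; simp
  unfold H1sq; linarith

lemma sq_deriv (u : E3 → ℂ) (hu : Differentiable ℝ u) (x : E3) :
    ∃ L : E3 →L[ℝ] ℂ, HasFDerivAt (fun x => ((‖u x‖ ^ 2 : ℝ) : ℂ)) L x ∧
      ‖L‖ ≤ ‖u x‖ ^ 2 + ‖fderiv ℝ u x‖ ^ 2 := by
  have h := (hu x).hasFDerivAt.norm_sq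
  have h2 := (Complex.ofRealCLM.hasFDerivAt (x := ‖u x‖ ^ 2)).comp x h
  refine ⟨_, h2, ?_⟩
  refine ContinuousLinearMap.opNorm_le_bound _ (by positivity) fun v => ?_
  have h3 : |inner ℝ (u x) (fderiv ℝ u x v)| ≤ ‖u x‖ * (‖fderiv ℝ u x‖ * ‖v‖) :=
    (abs_real_inner_le_norm _ _).trans (by gcongr; exact ContinuousLinearMap.le_opNorm _ _)
  have h4 : ‖u x‖ * ‖fderiv ℝ u x‖ * 2 ≤ ‖u x‖ ^ 2 + ‖fderiv ℝ u x‖ ^ 2 := by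
    nlinarith [sq_nonneg (‖u x‖ - ‖fderiv ℝ u x‖)]
  have h5 := mul_le_mul_of_nonneg_right h4 (norm_nonneg v)
  simp only [ContinuousLinearMap.comp_apply, Complex.ofRealCLM_apply, Complex.norm_real,
    smul_apply, innerSL_apply_apply, Real.norm_eq_abs, nsmul_eq_mul, abs_mul, Nat.cast_ofNat,
    abs_two]
  linarith

lemma phase_deriv (p x : E3) :
    HasFDerivAt (fun x : E3 => Complex.exp (-(Complex.I * ((inner ℝ p x : ℝ) : ℂ))))
      (Complex.exp (-(Complex.I * ((inner ℝ p x : ℝ) : ℂ))) •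
        (-(Complex.I • (Complex.ofRealCLM.comp (innerSL ℝ p))))) x := by
  have h : HasFDerivAt (fun x : E3 => ((inner ℝ p x : ℝ) : ℂ))
      (Complex.ofRealCLM.comp (innerSL ℝ p)) x :=
    (Complex.ofRealCLM.comp (innerSL ℝ p)).hasFDerivAt
  exact ((h.const_mul Complex.I).neg).cexp

lemma p_what_le (u : E3 → ℂ) (hu : Differentiable ℝ u) (h1 : MemLp u 2 volume)
    (h2 : MemLp (fun x => fderiv ℝ u x) 2 volume) (p : E3) :
    ‖p‖ * ‖what u p‖ ≤ H1sq u := by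
  rcases eq_or_ne p 0 with rfl | hp
  · simpa using H1sq_nonneg u
  set e : E3 → ℂ := fun x => Complex.exp (-(Complex.I * ((inner ℝ p x : ℝ) : ℂ))) with he
  set w : E3 → ℂ := fun x => ((‖u x‖ ^ 2 : ℝ) : ℂ) with hw
  have hwd : Differentiable ℝ w := fun x => by
    obtain ⟨L, hL, _⟩ := sq_deriv u hu x
    exact hL.differentiableAt
  have hed : Differentiable ℝ e := fun x => (phase_deriv p x).differentiableAt
  have hwb : ∀ x, ‖fderiv ℝ w x‖ ≤ ‖u x‖ ^ 2 + ‖fderiv ℝ u x‖ ^ 2 := fun x => by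
    obtain ⟨L, hL, hb⟩ := sq_deriv u hu x
    rw [hL.fderiv]; exact hb
  have hwi : Integrable w := (u_sq_int u h1).ofReal
  have hsum : Integrable (fun x => ‖u x‖ ^ 2 + ‖fderiv ℝ u x‖ ^ 2) :=
    (u_sq_int u h1).add (du_sq_int u h2)
  have hene : ∀ x, ‖e x‖ = 1 := fun x => norm_phase p x
  have hde : ∀ x, fderiv ℝ e x p = -(Complex.I * ((‖p‖ ^ 2 : ℝ) : ℂ)) * e x := fun x => by
    rw [(phase_deriv p x).fderiv]
    simp [he]
    ring
  have hbd : ∀ x, ‖e x * fderiv ℝ w x p‖ ≤ (‖u x‖ ^ 2 + ‖fderiv ℝ u x‖ ^ 2) * ‖p‖ := fun x => by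
    rw [norm_mul, hene, one_mul]
    exact (ContinuousLinearMap.le_opNorm _ _).trans (by gcongr; exact hwb x)
  have hei : Integrable (fun x => e x * w x) := by
    refine hwi.bdd_mul (c := 1) hed.continuous.aestronglyMeasurable
      (Filter.Eventually.of_forall fun x => (hene x).le)
  have hmeas : AEStronglyMeasurable (fun x => e x * fderiv ℝ w x p) volume :=
    hed.continuous.aestronglyMeasurable.mul
      (measurable_fderiv_apply_const ℝ w p).aestronglyMeasurable
  have hi1 : Integrable (fun x => e x * fderiv ℝ w x p) :=
    (hsum.mul_const ‖p‖).mono' hmeas (Filter.Eventually.of_forall hbd)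
  have hi2 : Integrable (fun x => fderiv ℝ e x p * w x) := by
    simp_rw [hde, mul_assoc]
    exact hei.const_mul _
  have key := integral_mul_fderiv_eq_neg_fderiv_mul_of_integrable (μ := volume) hi2 hi1 hei
    (fun x _ => hed x) (fun x _ => hwd x)
  have hk2 : ∫ x, fderiv ℝ e x p * w x = -(Complex.I * ((‖p‖ ^ 2 : ℝ) : ℂ)) * what u p := by
    simp_rw [hde, mul_assoc]
    rw [integral_const_mul]
    simp only [what, mul_assoc]
    rfl
  have hk3 : ‖p‖ ^ 2 * ‖what u p‖ = ‖∫ x, e x * fderiv ℝ w x p‖ := by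
    rw [key, hk2]
    simp
  have hk4 : ‖∫ x, e x * fderiv ℝ w x p‖ ≤ H1sq u * ‖p‖ := by
    refine (norm_integral_le_of_norm_le (hsum.mul_const ‖p‖)
      (Filter.Eventually.of_forall hbd)).trans (le_of_eq ?_)
    rw [integral_mul_const, integral_add (u_sq_int u h1) (du_sq_int u h2)]
    rfl
  have hpp : 0 < ‖p‖ := norm_pos_iff.2 hp
  nlinarith

lemma what_sq (u : E3 → ℂ) (hu : Differentiable ℝ u) (h1 : MemLp u 2 volume)
    (h2 : MemLp (fun x => fderiv ℝ u x) 2 volume) (p : E3) :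
    ‖what u p‖ ^ 2 ≤ 2 * H1sq u ^ 2 * (ω p ^ 2)⁻¹ := by
  have a := what_le u p
  have b := p_what_le u hu h1 h2 p
  have hω : ω p ^ 2 = 1 + ‖p‖ ^ 2 := Real.sq_sqrt (by positivity)
  rw [hω, ← div_eq_mul_inv, le_div_iff₀ (by positivity)]
  have a2 := pow_le_pow_left₀ (norm_nonneg _) a 2
  have b2 := pow_le_pow_left₀ (by positivity) b 2
  nlinarith

lemma omega_pos (k : E3) : 0 < ω k := Real.sqrt_pos.2 (by positivity)

lemma gw_eq (k : E3) : gw k = (ω k ^ 4)⁻¹ := by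
  have hω : ω k ^ 2 = 1 + ‖k‖ ^ 2 := Real.sq_sqrt (by positivity)
  rw [gw, ← hω]; ring

lemma f_le (k : E3) : ‖k‖ ^ 2 * B0 k ^ 2 ≤ (ω k ^ 3)⁻¹ := by
  have hω : ω k ^ 2 = 1 + ‖k‖ ^ 2 := Real.sq_sqrt (by positivity)
  have hp := omega_pos k
  have h1 : 1 ≤ ω k := by nlinarith [sq_nonneg ‖k‖]
  have hB : B0 k ^ 2 = 1 / (ω k * (‖k‖ ^ 2 + ω k) ^ 2) := by
    rw [B0, div_pow, mul_pow, Real.sq_sqrt hp.le, one_pow]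
  have hB2 : B0 k ^ 2 ≤ 1 / (ω k * (ω k ^ 2) ^ 2) := by
    rw [hB]
    gcongr
    linarith
  calc ‖k‖ ^ 2 * B0 k ^ 2 ≤ ω k ^ 2 * (1 / (ω k * (ω k ^ 2) ^ 2)) := by
        gcongr ?_ * ?_
        · linarith
    _ = (ω k ^ 3)⁻¹ := by field_simp

lemma amgm (a b c : ℝ) (ha : 0 < a) (hb : 0 < b) (hc : 0 < c) :
    (a ^ 3)⁻¹ * (b ^ 3)⁻¹ * (c ^ 2)⁻¹ ≤
      (a ^ 4)⁻¹ * (b ^ 4)⁻¹ + (a ^ 4)⁻¹ * (c ^ 4)⁻¹ + (b ^ 4)⁻¹ * (c ^ 4)⁻¹ := by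
  have h : a * b * c ^ 2 ≤ c ^ 4 + b ^ 4 + a ^ 4 := by
    nlinarith [sq_nonneg (a * b - c ^ 2), sq_nonneg (a ^ 2 - b ^ 2), sq_nonneg (a ^ 2), sq_nonneg (b ^ 2), sq_nonneg (c ^ 2)]
  have e1 : (a ^ 3)⁻¹ * (b ^ 3)⁻¹ * (c ^ 2)⁻¹ = (a * b * c ^ 2) / (a ^ 4 * b ^ 4 * c ^ 4) := by
    field_simp
  have e2 : (a ^ 4)⁻¹ * (b ^ 4)⁻¹ + (a ^ 4)⁻¹ * (c ^ 4)⁻¹ + (b ^ 4)⁻¹ * (c ^ 4)⁻¹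
      = (c ^ 4 + b ^ 4 + a ^ 4) / (a ^ 4 * b ^ 4 * c ^ 4) := by
    field_simp
  rw [e1, e2]
  gcongr

lemma Mker_sq_le (u : E3 → ℂ) (hu : Differentiable ℝ u) (h1 : MemLp u 2 volume)
    (h2 : MemLp (fun x => fderiv ℝ u x) 2 volume) (k l : E3) :
    ‖Mker u k l‖ ^ 2 ≤ 2 * H1sq u ^ 2 *
      (gw k * gw l + gw k * gw (k + l) + gw l * gw (k + l)) := by
  have hin : (inner ℝ k l : ℝ) ^ 2 ≤ ‖k‖ ^ 2 * ‖l‖ ^ 2 := by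
    rw [← mul_pow, ← sq_abs]
    exact pow_le_pow_left₀ (abs_nonneg _) (abs_real_inner_le_norm _ _) 2
  have e : ‖Mker u k l‖ ^ 2 = (inner ℝ k l : ℝ) ^ 2 * (B0 k ^ 2 * B0 l ^ 2) * ‖what u (k + l)‖ ^ 2 := by
    rw [Mker, norm_mul, Complex.norm_real, mul_pow, Real.norm_eq_abs, sq_abs]; ring
  have hk := omega_pos k
  have hl := omega_pos l
  have hs := omega_pos (k + l)
  rw [e, gw_eq, gw_eq, gw_eq]
  calc _ ≤ (‖k‖ ^ 2 * ‖l‖ ^ 2) * (B0 k ^ 2 * B0 l ^ 2) * (2 * H1sq u ^ 2 * (ω (k + l) ^ 2)⁻¹) := by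
        gcongr
        exact what_sq u hu h1 h2 _
    _ = 2 * H1sq u ^ 2 * ((‖k‖ ^ 2 * B0 k ^ 2) * (‖l‖ ^ 2 * B0 l ^ 2) * (ω (k + l) ^ 2)⁻¹) := by ring
    _ ≤ 2 * H1sq u ^ 2 * ((ω k ^ 3)⁻¹ * (ω l ^ 3)⁻¹ * (ω (k + l) ^ 2)⁻¹) := by
        gcongr
        · exact f_le k
        · exact f_le l
    _ ≤ _ := by
        gcongr
        exact amgm _ _ _ hk hl hs

lemma weight_int (g : E3 → ℝ≥0∞) (hg : Measurable g) :
    ∫⁻ q : E3 × E3, (g q.1 * g q.2 + g q.1 * g (q.1 + q.2) + g q.2 * g (q.1 + q.2)) =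
      3 * (∫⁻ k, g k) ^ 2 := by
  rw [lintegral_add_left (by fun_prop), lintegral_add_left (by fun_prop)]
  have i1 : ∫⁻ q : E3 × E3, g q.1 * g q.2 = (∫⁻ k, g k) ^ 2 := by
    rw [Measure.volume_eq_prod, lintegral_prod_mul hg.aemeasurable hg.aemeasurable, sq]
  have i2 : ∫⁻ q : E3 × E3, g q.1 * g (q.1 + q.2) = (∫⁻ k, g k) ^ 2 := by
    rw [Measure.volume_eq_prod, lintegral_prod _ (by fun_prop)]
    have : ∀ x : E3, ∫⁻ y, g x * g (x + y) = g x * ∫⁻ k, g k := fun x => by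
      rw [lintegral_const_mul _ (by fun_prop), lintegral_add_left_eq_self]
    simp_rw [this]
    rw [lintegral_mul_const _ hg, sq]
  have i3 : ∫⁻ q : E3 × E3, g q.2 * g (q.1 + q.2) = (∫⁻ k, g k) ^ 2 := by
    rw [Measure.volume_eq_prod, lintegral_prod_symm _ (by fun_prop)]
    have : ∀ y : E3, ∫⁻ x, g y * g (x + y) = g y * ∫⁻ k, g k := fun y => by
      rw [lintegral_const_mul _ (by fun_prop), lintegral_add_right_eq_self]
    simp_rw [this]
    rw [lintegral_mul_const _ hg, sq]
  rw [i1, i2, i3]; ring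

/-- There is `C > 0` such that for every differentiable `u` with `u, ∇u ∈ L²`:
`(∬ |M_u(k,l)|² dk dl)^{1/2} ≤ C‖u‖_{H¹}²`. -/
theorem Mker_HilbertSchmidt_bound :
    ∃ C > 0, ∀ u : EuclideanSpace ℝ (Fin 3) → ℂ,
      Differentiable ℝ u → MemLp u 2 volume →
      MemLp (fun x => fderiv ℝ u x) 2 volume →
      (∫⁻ q : EuclideanSpace ℝ (Fin 3) × EuclideanSpace ℝ (Fin 3),
          ENNReal.ofReal (‖Mker u q.1 q.2‖ ^ 2)) ^ (1 / 2 : ℝ) ≤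
        ENNReal.ofReal (C * H1norm u ^ 2) := by
  set J : ℝ := ∫ k, gw k with hJ
  have hJ0 : 0 ≤ J := integral_nonneg gw_nonneg
  refine ⟨Real.sqrt 6 * J + 1, by positivity, fun u hu h1 h2 => ?_⟩
  have hH := H1sq_nonneg u
  have hn : H1norm u ^ 2 = H1sq u := Real.sq_sqrt hH
  rw [hn]
  have hJl : ∫⁻ k, ENNReal.ofReal (gw k) = ENNReal.ofReal J :=
    (ofReal_integral_eq_lintegral_ofReal gw_integrable
      (Filter.Eventually.of_forall gw_nonneg)).symm
  have hgm : Measurable fun k => ENNReal.ofReal (gw k) := gw_cont.measurable.ennreal_ofReal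
  have main : (∫⁻ q : E3 × E3, ENNReal.ofReal (‖Mker u q.1 q.2‖ ^ 2)) ≤
      ENNReal.ofReal ((Real.sqrt 6 * J * H1sq u) ^ 2) := by
    calc _ ≤ ∫⁻ q : E3 × E3, ENNReal.ofReal (2 * H1sq u ^ 2) *
          (ENNReal.ofReal (gw q.1) * ENNReal.ofReal (gw q.2)
            + ENNReal.ofReal (gw q.1) * ENNReal.ofReal (gw (q.1 + q.2))
            + ENNReal.ofReal (gw q.2) * ENNReal.ofReal (gw (q.1 + q.2))) := by
          refine lintegral_mono fun q => ?_
          have a := gw_nonneg q.1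
          have b := gw_nonneg q.2
          have c := gw_nonneg (q.1 + q.2)
          rw [← ENNReal.ofReal_mul a, ← ENNReal.ofReal_mul a, ← ENNReal.ofReal_mul b,
            ← ENNReal.ofReal_add (by positivity) (by positivity),
            ← ENNReal.ofReal_add (by positivity) (by positivity),
            ← ENNReal.ofReal_mul (by positivity)]
          exact ENNReal.ofReal_le_ofReal (Mker_sq_le u hu h1 h2 q.1 q.2)
      _ = ENNReal.ofReal (2 * H1sq u ^ 2) * (3 * ENNReal.ofReal J ^ 2) := by
          rw [lintegral_const_mul' _ _ ENNReal.ofReal_ne_top,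
            weight_int (fun k => ENNReal.ofReal (gw k)) hgm, hJl]
      _ = _ := by
          rw [show (3 : ℝ≥0∞) = ENNReal.ofReal 3 by norm_num, ← ENNReal.ofReal_pow hJ0,
            ← ENNReal.ofReal_mul (by norm_num), ← ENNReal.ofReal_mul (by positivity)]
          congr 1
          rw [mul_pow, mul_pow, Real.sq_sqrt (by norm_num)]; ring
  calc _ ≤ (ENNReal.ofReal ((Real.sqrt 6 * J * H1sq u) ^ 2)) ^ (1 / 2 : ℝ) := by
        gcongr
    _ = ENNReal.ofReal (Real.sqrt 6 * J * H1sq u) := by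
        rw [ENNReal.ofReal_rpow_of_nonneg (by positivity) (by norm_num), ← Real.sqrt_eq_rpow,
          Real.sqrt_sq (by positivity)]
    _ ≤ _ := by
        apply ENNReal.ofReal_le_ofReal
        nlinarith

end
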